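/- Equivalence of the symmetrized Talagrand inequality and the functional Santaló inequality: Fix d ≥ 1 and let γ be the standard Gaussian measure on ℝ^d. The following two statements are equivalent. (i) For every centered probability measure μ on ℝ^d and every probability measure ν on ℝ^d (with finite second moments), W₂(μ, ν)² ≤ 2 Ent_γ(μ) + 2 Ent_γ(ν). (ii) For all measurable functions f, g on ℝ^d satisfying f(x) + g(y) ≤ −x·y for all x, y, such that e^f is integrable with ∫ x e^{f(x)} dx = 0, one has (∫ e^f dx)(∫ e^g dx) ≤ (2π)^d. -/

import Mathlib

open MeasureTheory ENNReal
open scoped RealInnerProductSpace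

/-- The standard Gaussian measure on `ℝ^d`, with density
`(2π)^{-d/2} exp(-|x|²/2)` with respect to Lebesgue measure. -/
noncomputable def stdGaussian (d : ℕ) : Measure (EuclideanSpace ℝ (Fin d)) :=
  volume.withDensity fun x =>
    ENNReal.ofReal ((2 * Real.pi) ^ (-(d : ℝ) / 2) * Real.exp (-‖x‖ ^ 2 / 2))

/-- `π` is a coupling of `μ` and `ν`: a measure on the product with the given marginals. -/
def IsCoupling {E : Type*} [MeasurableSpace E] (π : Measure (E × E)) (μ ν : Measure E) : Prop :=
  π.map Prod.fst = μ ∧ π.map Prod.snd = ν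

/-- The squared `L²` Kantorovich-Wasserstein distance `W₂(μ,ν)²`: the infimum of
`∫ |x-y|² dπ` over all couplings `π` of `μ` and `ν`. -/
noncomputable def W2sq {E : Type*} [MeasurableSpace E] [NormedAddCommGroup E]
    (μ ν : Measure E) : ℝ≥0∞ :=
  ⨅ (π : Measure (E × E)) (_ : IsCoupling π μ ν), ∫⁻ p, (‖p.1 - p.2‖₊ : ℝ≥0∞) ^ 2 ∂π

open Classical in
/-- The relative entropy (KL divergence) `Ent_γ(μ) = ∫ log(dμ/dγ) dμ` if `μ ≪ γ` (and the
integral makes sense), and `+∞` otherwise. -/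
noncomputable def relEnt {E : Type*} [MeasurableSpace E] (μ γ : Measure E) : ℝ≥0∞ :=
  if μ ≪ γ ∧ Integrable (fun x => Real.log (μ.rnDeriv γ x).toReal) μ
  then ENNReal.ofReal (∫ x, Real.log (μ.rnDeriv γ x).toReal ∂μ)
  else ∞

/-!
Both inequalities say the same thing about a *polar pair*, that is, functions with
`f x + g y ≤ -⟪x, y⟫`, because of two dualities. By Kantorovich duality,
`W₂(μ, ν)² = ∫ |x|² dμ + ∫ |y|² dν + 2 sup (∫ f dμ + ∫ g dν)`, the supremum being over polar pairs.
By the Gibbs variational principle, `Ent_γ(μ)` is the supremum of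
`∫ f dμ + ½ ∫ |x|² dμ - log ((2π)^(-d/2) ∫ e^f dx)`, attained when `μ` has density proportional
to `e^f`. Talagrand's inequality for the measures with densities proportional to `e^f` and `e^g`
therefore bounds `log ∫ e^f dx + log ∫ e^g dx`. Conversely, for given `μ` and `ν` the Santaló
inequality bounds the Kantorovich dual, once the barycentre of `e^f` is moved to the origin by
replacing `f x` by `f x + ⟪a, x⟫` and `g y` by `g (y + a)`: the new pair is still polar,
`∫ f dμ` does not change as `μ` is centered, and `∫ e^g dx` does not change by translation
invariance.

The nontrivial half of Kantorovich duality follows from separation of convex sets for finitely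
supported measures, by partitioning the space into finitely many pieces.
-/

section FiniteDuality

variable {ι κ : Type*} [Fintype ι] [Fintype κ] {p : ι → ℝ} {q : κ → ℝ}

/-- The matrix `m` is a transport plan between the weight vectors `p` and `q`: a nonnegative matrix
with row sums `p` and column sums `q`. -/
structure IsTransportPlan (m : ι → κ → ℝ) (p : ι → ℝ) (q : κ → ℝ) : Prop where
  nonneg : ∀ i j, 0 ≤ m i j
  row_sum : ∀ i, ∑ j, m i j = p i
  col_sum : ∀ j, ∑ i, m i j = q j

theorem IsTransportPlan.swap {m : ι → κ → ℝ} (hm : IsTransportPlan m p q) :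
    IsTransportPlan (fun j i => m i j) q p :=
  ⟨fun j i => hm.nonneg i j, hm.col_sum, hm.row_sum⟩

theorem IsTransportPlan.eq_zero_of_col_eq_zero {m : ι → κ → ℝ} (hm : IsTransportPlan m p q)
    {j : κ} (hj : q j = 0) (i : ι) : m i j = 0 := by
  rw [← hm.col_sum j, Finset.sum_eq_zero_iff_of_nonneg fun i _ => hm.nonneg i j] at hj
  exact hj i (Finset.mem_univ i)

/-- The linear map taking a matrix, indexed by pairs, to its row sums, its column sums and its
total cost for the cost matrix `c`. -/
def marginalsAndCost (c : ι → κ → ℝ) : (ι × κ → ℝ) →ₗ[ℝ] (ι → ℝ) × (κ → ℝ) × ℝ where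
  toFun m := (fun i => ∑ j, m (i, j), fun j => ∑ i, m (i, j), ∑ i, ∑ j, m (i, j) * c i j)
  map_add' m n := by ext <;> simp [Finset.sum_add_distrib, add_mul]
  map_smul' r m := by ext <;> simp [Finset.mul_sum, mul_assoc]

theorem marginalsAndCost_apply (c : ι → κ → ℝ) (m : ι × κ → ℝ) :
    marginalsAndCost c m =
      (fun i => ∑ j, m (i, j), fun j => ∑ i, m (i, j), ∑ i, ∑ j, m (i, j) * c i j) :=
  rfl

theorem marginalsAndCost_mul (c : ι → κ → ℝ) (hp : ∑ i, p i = 1) (hq : ∑ j, q j = 1) :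
    marginalsAndCost c (fun x => p x.1 * q x.2) = (p, q, ∑ i, ∑ j, p i * q j * c i j) := by
  simp [marginalsAndCost_apply, ← Finset.mul_sum, ← Finset.sum_mul, hp, hq]

theorem marginalsAndCost_single [DecidableEq ι] [DecidableEq κ] (c : ι → κ → ℝ) (i : ι) (j : κ) :
    marginalsAndCost c (Pi.single (i, j) 1) = (Pi.single i 1, Pi.single j 1, c i j) := by
  have hsingle : ∀ i' j', (Pi.single (i, j) 1 : ι × κ → ℝ) (i', j') =
      (Pi.single i 1 : ι → ℝ) i' * (Pi.single j 1 : κ → ℝ) j' := fun i' j' => by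
    by_cases hi : i' = i <;> by_cases hj : j' = j <;> simp [hi, hj]
  ext <;> simp [marginalsAndCost_apply, hsingle, Pi.single_apply]

theorem mul_mem_stdSimplex (hp : p ∈ stdSimplex ℝ ι) (hq : q ∈ stdSimplex ℝ κ) :
    (fun x : ι × κ => p x.1 * q x.2) ∈ stdSimplex ℝ (ι × κ) := by
  refine ⟨fun x => mul_nonneg (hp.1 _) (hq.1 _), ?_⟩
  simp [Fintype.sum_prod_type, ← Finset.mul_sum, hp.2, hq.2]

theorem exists_coordinates_of_linearMap_prod (φ : (ι → ℝ) × (κ → ℝ) × ℝ →ₗ[ℝ] ℝ) :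
    ∃ (A : ι → ℝ) (B : κ → ℝ) (T : ℝ), ∀ x y t,
      φ (x, y, t) = ∑ i, x i * A i + ∑ j, y j * B j + t * T := by
  classical
  refine ⟨fun i => φ (fun j => if i = j then 1 else 0, 0, 0),
    fun i => φ (0, fun j => if i = j then 1 else 0, 0), φ (0, 0, 1), fun x y t => ?_⟩
  have hsplit : φ (x, y, t) = φ (x, 0, 0) + φ (0, y, 0) + t * φ (0, 0, 1) := by
    rw [← smul_eq_mul, ← map_smul, ← map_add, ← map_add]
    simp
  rw [hsplit]
  congr 2
  · exact LinearMap.pi_apply_eq_sum_univ (φ ∘ₗ LinearMap.inl ℝ (ι → ℝ) ((κ → ℝ) × ℝ)) x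
  · exact LinearMap.pi_apply_eq_sum_univ
      (φ ∘ₗ LinearMap.inr ℝ (ι → ℝ) ((κ → ℝ) × ℝ) ∘ₗ LinearMap.inl ℝ (κ → ℝ) ℝ) y

theorem exists_potentials_of_separation {c : ι → κ → ℝ} {τ u T : ℝ} {A : ι → ℝ} {B : κ → ℝ}
    (hp : ∑ i, p i = 1) (hT : T < 0) (hpoint : ∀ i j, A i + B j + c i j * T ≤ u)
    (hτ : u < ∑ i, p i * A i + ∑ j, q j * B j + τ * T) :
    ∃ (a : ι → ℝ) (b : κ → ℝ), (∀ i j, a i + b j ≤ c i j) ∧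
      τ < ∑ i, p i * a i + ∑ j, q j * b j := by
  refine ⟨fun i => (A i - u) / (-T), fun j => B j / (-T), fun i j => ?_, ?_⟩
  · rw [← add_div, div_le_iff₀ (neg_pos.2 hT)]
    linarith [hpoint i j]
  · have hvalue : ∑ i, p i * ((A i - u) / (-T)) + ∑ j, q j * (B j / (-T)) =
        (∑ i, p i * A i + ∑ j, q j * B j - u) / (-T) := by
      simp only [← mul_div_assoc, ← Finset.sum_div, mul_sub, Finset.sum_sub_distrib,
        ← Finset.sum_mul, hp]
      ring
    rw [hvalue, lt_div_iff₀ (neg_pos.2 hT)]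
    linarith

-- The image of the simplex under `marginalsAndCost c` either meets the ray `{p} × {q} × (-∞, τ]`,
-- which yields a plan, or is strictly separated from it, which yields potentials.
theorem exists_isTransportPlan_or_exists_potentials (hp : p ∈ stdSimplex ℝ ι)
    (hq : q ∈ stdSimplex ℝ κ) (c : ι → κ → ℝ) (τ : ℝ) :
    (∃ m, IsTransportPlan m p q ∧ ∑ i, ∑ j, m i j * c i j ≤ τ) ∨
    (∃ (a : ι → ℝ) (b : κ → ℝ), (∀ i j, a i + b j ≤ c i j) ∧
      τ < ∑ i, p i * a i + ∑ j, q j * b j) := by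
  classical
  by_cases hdisj : Disjoint (marginalsAndCost c '' stdSimplex ℝ (ι × κ))
    ({p} ×ˢ {q} ×ˢ Set.Iic τ)
  · right
    obtain ⟨φ, u, v, hsimplex, huv, hray⟩ := geometric_hahn_banach_compact_closed
      ((convex_stdSimplex ℝ (ι × κ)).linear_image (marginalsAndCost c))
      ((isCompact_stdSimplex ℝ (ι × κ)).image
        (marginalsAndCost c).continuous_of_finiteDimensional)
      ((convex_singleton p).prod ((convex_singleton q).prod (convex_Iic τ)))
      (isClosed_singleton.prod (isClosed_singleton.prod isClosed_Iic)) hdisj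
    obtain ⟨A, B, T, hφ⟩ := exists_coordinates_of_linearMap_prod φ.toLinearMap
    simp only [ContinuousLinearMap.coe_coe] at hφ
    have hbelow : ∀ m ∈ stdSimplex ℝ (ι × κ), φ (marginalsAndCost c m) < u :=
      fun m hm => hsimplex _ ⟨m, hm, rfl⟩
    have habove : ∀ t ≤ τ, u < ∑ i, p i * A i + ∑ j, q j * B j + t * T := fun t ht =>
      hφ p q t ▸ huv.trans (hray (p, q, t) ⟨rfl, rfl, ht⟩)
    have hT : T < 0 := by
      by_contra! hT
      have hmul := hbelow _ (mul_mem_stdSimplex hp hq)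
      rw [marginalsAndCost_mul c hp.2 hq.2, hφ] at hmul
      set C := ∑ i, ∑ j, p i * q j * c i j
      linarith [habove _ (min_le_left τ C), mul_le_mul_of_nonneg_right (min_le_right τ C) hT]
    refine exists_potentials_of_separation hp.2 hT (fun i j => ?_) (habove τ le_rfl)
    have hsingle := hbelow _ (single_mem_stdSimplex ℝ (i, j))
    rw [marginalsAndCost_single, hφ] at hsingle
    simpa [Pi.single_apply] using hsingle.le
  · left
    obtain ⟨_, ⟨m, hm, rfl⟩, hrow, hcol, hcost⟩ := Set.not_disjoint_iff.1 hdisj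
    exact ⟨fun i j => m (i, j), ⟨fun i j => hm.1 _, congrFun hrow, congrFun hcol⟩, hcost⟩

end FiniteDuality

section PolarPair

variable {E : Type*} [NormedAddCommGroup E] [InnerProductSpace ℝ E] {f g : E → ℝ}

/-- The functions `f` and `g` are admissible potentials in the Kantorovich dual for the cost
`-⟪x, y⟫`; equivalently, `-f` dominates the Legendre transform of `-g`. -/
def IsPolarPair (f g : E → ℝ) : Prop :=
  ∀ x y, f x + g y ≤ -⟪x, y⟫

theorem IsPolarPair.symm (h : IsPolarPair f g) : IsPolarPair g f := fun x y => by
  rw [add_comm, real_inner_comm]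
  exact h y x

theorem IsPolarPair.add_inner_comp_add (h : IsPolarPair f g) (a : E) :
    IsPolarPair (fun x => f x + ⟪a, x⟫) (fun y => g (y + a)) := fun x y => by
  have := h x (y + a)
  rw [inner_add_right, real_inner_comm a x] at this
  linarith

end PolarPair

section Coupling

variable {E : Type*} [MeasurableSpace E] {μ ν : Measure E} {π : Measure (E × E)}

namespace IsCoupling

theorem measurePreserving_fst (hπ : IsCoupling π μ ν) : MeasurePreserving Prod.fst π μ :=
  ⟨measurable_fst, hπ.1⟩

theorem measurePreserving_snd (hπ : IsCoupling π μ ν) : MeasurePreserving Prod.snd π ν :=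
  ⟨measurable_snd, hπ.2⟩

theorem isProbabilityMeasure [IsProbabilityMeasure μ] (hπ : IsCoupling π μ ν) :
    IsProbabilityMeasure π :=
  have : IsProbabilityMeasure (π.map Prod.fst) := hπ.1 ▸ ‹_›
  Measure.isProbabilityMeasure_of_map Prod.fst

theorem integrable_add {F G : E → ℝ} (hπ : IsCoupling π μ ν) (hF : Integrable F μ)
    (hG : Integrable G ν) : Integrable (fun z => F z.1 + G z.2) π :=
  (hπ.measurePreserving_fst.integrable_comp_of_integrable hF).add
    (hπ.measurePreserving_snd.integrable_comp_of_integrable hG)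

theorem integral_add {F G : E → ℝ} (hπ : IsCoupling π μ ν) (hF : Integrable F μ)
    (hG : Integrable G ν) : ∫ z, F z.1 + G z.2 ∂π = ∫ x, F x ∂μ + ∫ y, G y ∂ν := by
  obtain ⟨rfl, rfl⟩ := hπ
  rw [integral_map measurable_fst.aemeasurable hF.1, integral_map measurable_snd.aemeasurable hG.1]
  exact MeasureTheory.integral_add (hF.comp_measurable measurable_fst)
    (hG.comp_measurable measurable_snd)

variable [NormedAddCommGroup E] [InnerProductSpace ℝ E] [BorelSpace E]
  [SecondCountableTopology E]

theorem integrable_inner (hπ : IsCoupling π μ ν) (hμ : Integrable (fun x => ‖x‖ ^ 2) μ)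
    (hν : Integrable (fun y => ‖y‖ ^ 2) ν) : Integrable (fun z => ⟪z.1, z.2⟫) π := by
  refine (hπ.integrable_add hμ hν).mono' (by fun_prop) (.of_forall fun z => ?_)
  refine (norm_inner_le_norm z.1 z.2).trans ?_
  nlinarith [two_mul_le_add_sq ‖z.1‖ ‖z.2‖, norm_nonneg z.1, norm_nonneg z.2]

theorem neg_integral_inner_le {R S : E → ℝ} {k : E × E → ℝ} (hπ : IsCoupling π μ ν)
    (hμ : Integrable (fun x => ‖x‖ ^ 2) μ) (hν : Integrable (fun y => ‖y‖ ^ 2) ν)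
    (hR : Integrable R μ) (hS : Integrable S ν) (hk : Integrable k π)
    (hle : ∀ z : E × E, -⟪z.1, z.2⟫ ≤ k z + (R z.1 + S z.2)) :
    -∫ z, ⟪z.1, z.2⟫ ∂π ≤ ∫ z, k z ∂π + (∫ x, R x ∂μ + ∫ y, S y ∂ν) := by
  rw [← integral_neg, ← hπ.integral_add hR hS,
    ← MeasureTheory.integral_add hk (hπ.integrable_add hR hS)]
  exact integral_mono (hπ.integrable_inner hμ hν).neg (hk.add (hπ.integrable_add hR hS)) hle

theorem lintegral_nnnorm_sub_sq (hπ : IsCoupling π μ ν) (hμ : Integrable (fun x => ‖x‖ ^ 2) μ)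
    (hν : Integrable (fun y => ‖y‖ ^ 2) ν) :
    ∫⁻ z, (‖z.1 - z.2‖₊ : ℝ≥0∞) ^ 2 ∂π =
      ENNReal.ofReal (∫ x, ‖x‖ ^ 2 ∂μ + ∫ y, ‖y‖ ^ 2 ∂ν - 2 * ∫ z, ⟪z.1, z.2⟫ ∂π) := by
  have hexpand : ∀ z : E × E, ‖z.1 - z.2‖ ^ 2 = ‖z.1‖ ^ 2 + ‖z.2‖ ^ 2 - 2 * ⟪z.1, z.2⟫ :=
    fun z => by rw [norm_sub_sq_real]; ring
  have hint : Integrable (fun z => ‖z.1‖ ^ 2 + ‖z.2‖ ^ 2) π := hπ.integrable_add hμ hν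
  have hinner := (hπ.integrable_inner hμ hν).const_mul 2
  rw [← hπ.integral_add hμ hν, ← integral_const_mul, ← integral_sub hint hinner]
  simp only [← hexpand]
  rw [ofReal_integral_eq_lintegral_ofReal
    ((hint.sub hinner).congr (.of_forall fun z => (hexpand z).symm))
    (.of_forall fun z => sq_nonneg _)]
  simp only [ENNReal.ofReal_pow (norm_nonneg _), ofReal_norm, enorm_eq_nnnorm]

end IsCoupling

theorem IsPolarPair.ofReal_le_W2sq [NormedAddCommGroup E] [InnerProductSpace ℝ E] [BorelSpace E]
    [SecondCountableTopology E] {f g : E → ℝ}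
    (h : IsPolarPair f g) (hμ : Integrable (fun x => ‖x‖ ^ 2) μ)
    (hν : Integrable (fun y => ‖y‖ ^ 2) ν) (hf : Integrable f μ) (hg : Integrable g ν) :
    ENNReal.ofReal (∫ x, ‖x‖ ^ 2 ∂μ + ∫ y, ‖y‖ ^ 2 ∂ν + 2 * (∫ x, f x ∂μ + ∫ y, g y ∂ν)) ≤
      W2sq μ ν := by
  refine le_iInf₂ fun π hπ => ?_
  rw [hπ.lintegral_nnnorm_sub_sq hμ hν]
  have hle : ∫ z, f z.1 + g z.2 ∂π ≤ ∫ z, -⟪z.1, z.2⟫ ∂π :=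
    integral_mono (hπ.integrable_add hf hg) (hπ.integrable_inner hμ hν).neg fun z => h z.1 z.2
  rw [hπ.integral_add hf hg, integral_neg] at hle
  exact ENNReal.ofReal_le_ofReal (by linarith)

end Coupling

section Discretization

theorem integrable_comp_of_finite {α ι : Type*} [MeasurableSpace α] [Finite ι] [MeasurableSpace ι]
    [MeasurableSingletonClass ι] {μ : Measure α} [IsFiniteMeasure μ] {s : α → ι}
    (hs : Measurable s) (a : ι → ℝ) : Integrable (fun x => a (s x)) μ :=
  (Integrable.of_finite (μ := μ.map s) (f := a)).comp_measurable hs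

section LiftPlan

variable {α ι κ : Type*} [MeasurableSpace α] [Fintype ι] [Fintype κ] {μ ν : Measure α} {s : α → ι}
  {t : α → κ} {m : ι → κ → ℝ}

/-- The measure on `α × α` which gives the cell `s ⁻¹' {i} ×ˢ t ⁻¹' {j}` the mass `m i j`, and is on
that cell proportional to `μ ⊗ ν`. It lifts a transport plan between the laws of `s` and `t` to a
coupling of `μ` and `ν`. -/
noncomputable def liftPlan (μ ν : Measure α) (s : α → ι) (t : α → κ) (m : ι → κ → ℝ) :
    Measure (α × α) :=
  ∑ i, ∑ j, ENNReal.ofReal (m i j) •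
    (ProbabilityTheory.cond μ (s ⁻¹' {i})).prod (ProbabilityTheory.cond ν (t ⁻¹' {j}))

theorem ofReal_smul_cond_prod_cond_map_fst [IsFiniteMeasure ν]
    (hm : IsTransportPlan m (fun i => μ.real (s ⁻¹' {i})) fun j => ν.real (t ⁻¹' {j}))
    (i : ι) (j : κ) :
    ENNReal.ofReal (m i j) • ((ProbabilityTheory.cond μ (s ⁻¹' {i})).prod
      (ProbabilityTheory.cond ν (t ⁻¹' {j}))).map Prod.fst =
    ENNReal.ofReal (m i j) • ProbabilityTheory.cond μ (s ⁻¹' {i}) := by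
  by_cases hν : ν (t ⁻¹' {j}) = 0
  · simp [hm.eq_zero_of_col_eq_zero (j := j) (by simp [measureReal_def, hν]) i]
  · have := ProbabilityTheory.cond_isProbabilityMeasure hν
    rw [Measure.map_fst_prod, measure_univ, one_smul]

theorem liftPlan_map_swap [SFinite μ] [SFinite ν] :
    (liftPlan μ ν s t m).map Prod.swap = liftPlan ν μ t s fun j i => m i j := by
  simp only [liftPlan, ← Measure.mapₗ_apply_of_measurable measurable_swap, map_sum, map_smul]
  simp only [Measure.mapₗ_apply_of_measurable measurable_swap, Measure.prod_swap]
  exact Finset.sum_comm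

variable [MeasurableSpace ι] [MeasurableSingletonClass ι]

theorem integral_comp_of_fintype [IsFiniteMeasure μ] (hs : Measurable s) (a : ι → ℝ) :
    ∫ x, a (s x) ∂μ = ∑ i, μ.real (s ⁻¹' {i}) * a i := by
  rw [← integral_map hs.aemeasurable (by fun_prop), integral_fintype Integrable.of_finite]
  simp only [map_measureReal_apply hs (measurableSet_singleton _), smul_eq_mul]

theorem measureReal_fiber_mem_stdSimplex [IsProbabilityMeasure μ] (hs : Measurable s) :
    (fun i => μ.real (s ⁻¹' {i})) ∈ stdSimplex ℝ ι :=
  ⟨fun _ => measureReal_nonneg, by simpa using (integral_comp_of_fintype (μ := μ) hs 1).symm⟩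

theorem liftPlan_map_fst [IsFiniteMeasure μ] [IsFiniteMeasure ν] (hs : Measurable s)
    (hm : IsTransportPlan m (fun i => μ.real (s ⁻¹' {i})) fun j => ν.real (t ⁻¹' {j})) :
    (liftPlan μ ν s t m).map Prod.fst = μ := by
  calc (liftPlan μ ν s t m).map Prod.fst
      = ∑ i, ∑ j, ENNReal.ofReal (m i j) • ProbabilityTheory.cond μ (s ⁻¹' {i}) := by
        simp only [← ofReal_smul_cond_prod_cond_map_fst hm, liftPlan,
          ← Measure.mapₗ_apply_of_measurable measurable_fst, map_sum, map_smul]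
    _ = ∑ i, μ (s ⁻¹' {i}) • ProbabilityTheory.cond μ (s ⁻¹' {i}) := by
        simp only [← Finset.sum_smul, ← ENNReal.ofReal_sum_of_nonneg fun j _ => hm.nonneg _ j,
          hm.row_sum, ofReal_measureReal (measure_ne_top μ _)]
    _ = μ := ProbabilityTheory.sum_meas_smul_cond_fiber hs μ

variable [MeasurableSpace κ] [MeasurableSingletonClass κ]

theorem isCoupling_liftPlan [IsFiniteMeasure μ] [IsFiniteMeasure ν] (hs : Measurable s)
    (ht : Measurable t)
    (hm : IsTransportPlan m (fun i => μ.real (s ⁻¹' {i})) fun j => ν.real (t ⁻¹' {j})) :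
    IsCoupling (liftPlan μ ν s t m) μ ν := by
  refine ⟨liftPlan_map_fst hs hm, ?_⟩
  calc (liftPlan μ ν s t m).map Prod.snd
      = ((liftPlan μ ν s t m).map Prod.swap).map Prod.fst :=
        (Measure.map_map measurable_fst measurable_swap).symm
    _ = ν := by rw [liftPlan_map_swap, liftPlan_map_fst ht hm.swap]

theorem mul_integral_cond_prod_cond [IsFiniteMeasure μ] [IsFiniteMeasure ν] (hs : Measurable s)
    (ht : Measurable t)
    (hm : IsTransportPlan m (fun i => μ.real (s ⁻¹' {i})) fun j => ν.real (t ⁻¹' {j}))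
    (c : ι → κ → ℝ) (i : ι) (j : κ) :
    m i j * ∫ z, c (s z.1) (t z.2) ∂(ProbabilityTheory.cond μ (s ⁻¹' {i})).prod
      (ProbabilityTheory.cond ν (t ⁻¹' {j})) = m i j * c i j := by
  rcases eq_or_ne (m i j) 0 with h0 | h0
  · simp [h0]
  have hμ : μ (s ⁻¹' {i}) ≠ 0 := fun h =>
    h0 (hm.swap.eq_zero_of_col_eq_zero (j := i) (by simp [measureReal_def, h]) j)
  have hν : ν (t ⁻¹' {j}) ≠ 0 := fun h =>
    h0 (hm.eq_zero_of_col_eq_zero (j := j) (by simp [measureReal_def, h]) i)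
  have := ProbabilityTheory.cond_isProbabilityMeasure hμ
  have := ProbabilityTheory.cond_isProbabilityMeasure hν
  have hconst : (fun z : α × α => c (s z.1) (t z.2)) =ᵐ[(ProbabilityTheory.cond μ
      (s ⁻¹' {i})).prod (ProbabilityTheory.cond ν (t ⁻¹' {j}))] fun _ => c i j := by
    filter_upwards [Measure.quasiMeasurePreserving_fst.ae
        (ProbabilityTheory.ae_cond_mem (hs (measurableSet_singleton i))),
      Measure.quasiMeasurePreserving_snd.ae
        (ProbabilityTheory.ae_cond_mem (ht (measurableSet_singleton j)))] with z hzs hzt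
    rw [show s z.1 = i from hzs, show t z.2 = j from hzt]
  rw [integral_congr_ae hconst, integral_const, probReal_univ, one_smul]

theorem integral_liftPlan [IsFiniteMeasure μ] [IsFiniteMeasure ν] (hs : Measurable s)
    (ht : Measurable t)
    (hm : IsTransportPlan m (fun i => μ.real (s ⁻¹' {i})) fun j => ν.real (t ⁻¹' {j}))
    (c : ι → κ → ℝ) :
    ∫ z, c (s z.1) (t z.2) ∂(liftPlan μ ν s t m) = ∑ i, ∑ j, m i j * c i j := by
  have hmeas : Measurable fun z : α × α => (s z.1, t z.2) := by fun_prop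
  have hint : ∀ i j, Integrable (fun z : α × α => c (s z.1) (t z.2))
      (ENNReal.ofReal (m i j) • (ProbabilityTheory.cond μ (s ⁻¹' {i})).prod
        (ProbabilityTheory.cond ν (t ⁻¹' {j}))) := fun i j =>
    (integrable_comp_of_finite hmeas (Function.uncurry c)).smul_measure ENNReal.ofReal_ne_top
  rw [liftPlan,
    integral_finsetSum_measure fun i _ => integrable_finsetSum_measure.2 fun j _ => hint i j]
  refine Finset.sum_congr rfl fun i _ => ?_
  rw [integral_finsetSum_measure fun j _ => hint i j]
  refine Finset.sum_congr rfl fun j _ => ?_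
  rw [integral_smul_measure, ENNReal.toReal_ofReal (hm.nonneg i j), smul_eq_mul,
    mul_integral_cond_prod_cond hs ht hm]

end LiftPlan

theorem exists_isCoupling_or_exists_potentials {α ι κ : Type*} [MeasurableSpace α] [Finite ι]
    [Finite κ] [MeasurableSpace ι] [MeasurableSpace κ] [MeasurableSingletonClass ι]
    [MeasurableSingletonClass κ] {μ ν : Measure α} [IsProbabilityMeasure μ]
    [IsProbabilityMeasure ν] {s : α → ι} {t : α → κ} (hs : Measurable s) (ht : Measurable t)
    (c : ι → κ → ℝ) (τ : ℝ) :
    (∃ π, IsCoupling π μ ν ∧ ∫ z, c (s z.1) (t z.2) ∂π ≤ τ) ∨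
    (∃ (a : ι → ℝ) (b : κ → ℝ), (∀ i j, a i + b j ≤ c i j) ∧
      τ < ∫ x, a (s x) ∂μ + ∫ y, b (t y) ∂ν) := by
  have := Fintype.ofFinite ι
  have := Fintype.ofFinite κ
  simp only [integral_comp_of_fintype hs, integral_comp_of_fintype ht]
  refine (exists_isTransportPlan_or_exists_potentials (measureReal_fiber_mem_stdSimplex hs)
    (measureReal_fiber_mem_stdSimplex ht) c τ).imp_left ?_
  rintro ⟨m, hm, hcost⟩
  exact ⟨liftPlan μ ν s t m, isCoupling_liftPlan hs ht hm, (integral_liftPlan hs ht hm c).trans_le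
    hcost⟩

end Discretization

section StrongDuality

variable {E : Type*} [NormedAddCommGroup E] [MeasurableSpace E] [BorelSpace E]
  [SecondCountableTopology E] {μ ν : Measure E}

theorem exists_simpleFunc_integral_sq_norm_sub_le (hμ : Integrable (fun x => ‖x‖ ^ 2) μ) {δ : ℝ}
    (hδ : 0 < δ) :
    ∃ s : SimpleFunc E E, Integrable (fun x => ‖x - s x‖ ^ 2) μ ∧
      ∫ x, ‖x - s x‖ ^ 2 ∂μ ≤ δ := by
  have hid : MemLp (fun x : E => x) 2 μ := (memLp_two_iff_integrable_sq_norm (by fun_prop)).2 hμ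
  have hsqrt : 0 < √δ := Real.sqrt_pos.2 hδ
  obtain ⟨s, hs, hs2⟩ := hid.exists_simpleFunc_eLpNorm_sub_lt (by norm_num)
    (ENNReal.ofReal_pos.2 hsqrt).ne'
  have hsub := hid.sub hs2
  refine ⟨s, (memLp_two_iff_integrable_sq_norm hsub.1).1 hsub, ?_⟩
  rw [hsub.eLpNorm_eq_integral_rpow_norm (by norm_num) (by norm_num),
    ENNReal.ofReal_lt_ofReal_iff hsqrt] at hs
  simp only [ENNReal.toReal_ofNat, Real.rpow_ofNat, Pi.sub_apply] at hs
  rw [← one_div, ← Real.sqrt_eq_rpow] at hs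
  exact ((Real.sqrt_lt_sqrt_iff (by positivity)).1 hs).le

/-- The share of the point `x` in the error made when both arguments of an inner product are
rounded, `x` to `z`. The parameter `η` is the weight in Young's inequality. -/
noncomputable def roundingError {E : Type*} [NormedAddCommGroup E] (η : ℝ) (x z : E) : ℝ :=
  ((η⁻¹ + 1) * ‖x - z‖ ^ 2 + η * ‖x‖ ^ 2) / 2

theorem abs_inner_sub_inner_le_roundingError {E : Type*} [NormedAddCommGroup E]
    [InnerProductSpace ℝ E] {η : ℝ} (hη : 0 < η) (x y z w : E) :
    |⟪x, y⟫ - ⟪z, w⟫| ≤ roundingError η x z + roundingError η y w := by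
  have hexpand : ⟪x, y⟫ - ⟪z, w⟫ = ⟪x - z, y⟫ + ⟪x, y - w⟫ - ⟪x - z, y - w⟫ := by
    simp only [inner_sub_left, inner_sub_right]
    ring
  have hfst : 2 * |⟪x - z, y⟫| ≤ η⁻¹ * ‖x - z‖ ^ 2 + η * ‖y‖ ^ 2 := by
    have := two_mul_le_add_mul_sq (a := ‖y‖) (b := ‖x - z‖) hη
    linarith [abs_real_inner_le_norm (x - z) y]
  have hsnd : 2 * |⟪x, y - w⟫| ≤ η⁻¹ * ‖y - w‖ ^ 2 + η * ‖x‖ ^ 2 := by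
    have := two_mul_le_add_mul_sq (a := ‖x‖) (b := ‖y - w‖) hη
    linarith [abs_real_inner_le_norm x (y - w)]
  have hboth : 2 * |⟪x - z, y - w⟫| ≤ ‖x - z‖ ^ 2 + ‖y - w‖ ^ 2 := by
    linarith [abs_real_inner_le_norm (x - z) (y - w), two_mul_le_add_sq ‖x - z‖ ‖y - w‖]
  unfold roundingError
  rw [hexpand]
  linarith [abs_sub (⟪x - z, y⟫ + ⟪x, y - w⟫) ⟪x - z, y - w⟫, abs_add_le ⟪x - z, y⟫ ⟪x, y - w⟫]

theorem exists_simpleFunc_integral_roundingError_le (hμ : Integrable (fun x => ‖x‖ ^ 2) μ) {η : ℝ}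
    (hη : 0 < η) :
    ∃ s : SimpleFunc E E, Integrable (fun x => roundingError η x (s x)) μ ∧
      ∫ x, roundingError η x (s x) ∂μ ≤ η * (1 + ∫ x, ‖x‖ ^ 2 ∂μ) := by
  obtain ⟨s, hs, hsle⟩ := exists_simpleFunc_integral_sq_norm_sub_le hμ
    (δ := η / (η⁻¹ + 1)) (by positivity)
  refine ⟨s, ((hs.const_mul _).add (hμ.const_mul _)).div_const 2, ?_⟩
  have hmul := mul_le_mul_of_nonneg_left hsle (show 0 ≤ η⁻¹ + 1 by positivity)
  rw [mul_div_cancel₀ _ (by positivity)] at hmul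
  have hmoment : 0 ≤ η * ∫ x, ‖x‖ ^ 2 ∂μ := by positivity
  simp only [roundingError]
  rw [integral_div, integral_add (hs.const_mul _) (hμ.const_mul _), integral_const_mul,
    integral_const_mul]
  linarith

variable [InnerProductSpace ℝ E]

theorem exists_simpleFunc_abs_inner_sub_inner_le (hμ : Integrable (fun x => ‖x‖ ^ 2) μ)
    (hν : Integrable (fun y => ‖y‖ ^ 2) ν) {ε : ℝ} (hε : 0 < ε) :
    ∃ (s t : SimpleFunc E E) (R S : E → ℝ), Measurable R ∧ Measurable S ∧ Integrable R μ ∧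
      Integrable S ν ∧ ∫ x, R x ∂μ + ∫ y, S y ∂ν ≤ ε ∧
      ∀ x y, |⟪x, y⟫ - ⟪s x, t y⟫| ≤ R x + S y := by
  set M := 2 + ∫ x, ‖x‖ ^ 2 ∂μ + ∫ y, ‖y‖ ^ 2 ∂ν with hM
  have hMpos : 0 < M := by positivity
  have hη : 0 < ε / M := by positivity
  obtain ⟨s, hs, hsle⟩ := exists_simpleFunc_integral_roundingError_le hμ hη
  obtain ⟨t, ht, htle⟩ := exists_simpleFunc_integral_roundingError_le hν hη
  have hmeas (s : SimpleFunc E E) : Measurable fun x => roundingError (ε / M) x (s x) := by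
    have := s.measurable
    unfold roundingError
    fun_prop
  refine ⟨s, t, _, _, hmeas s, hmeas t, hs, ht, ?_, fun x y =>
    abs_inner_sub_inner_le_roundingError hη x y (s x) (t y)⟩
  calc _ ≤ ε / M * M := by rw [hM] at hsle htle ⊢; linarith
    _ = ε := div_mul_cancel₀ ε hMpos.ne'

theorem exists_isCoupling_or_exists_isPolarPair [IsProbabilityMeasure μ] [IsProbabilityMeasure ν]
    (hμ : Integrable (fun x => ‖x‖ ^ 2) μ) (hν : Integrable (fun y => ‖y‖ ^ 2) ν) (τ : ℝ) {ε : ℝ}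
    (hε : 0 < ε) :
    (∃ π, IsCoupling π μ ν ∧ -∫ z, ⟪z.1, z.2⟫ ∂π ≤ τ + ε) ∨
    (∃ f g : E → ℝ, Measurable f ∧ Measurable g ∧ IsPolarPair f g ∧ Integrable f μ ∧
      Integrable g ν ∧ τ < ∫ x, f x ∂μ + ∫ y, g y ∂ν) := by
  obtain ⟨s, t, R, S, hRm, hSm, hR, hS, hRS, hround⟩ :=
    exists_simpleFunc_abs_inner_sub_inner_le hμ hν (half_pos hε)
  have hs : Measurable fun x => (⟨s x, s.mem_range_self x⟩ : s.range) := s.measurable.subtype_mk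
  have ht : Measurable fun y => (⟨t y, t.mem_range_self y⟩ : t.range) := t.measurable.subtype_mk
  refine (exists_isCoupling_or_exists_potentials (μ := μ) (ν := ν) hs ht
    (fun i j => -⟪(i : E), (j : E)⟫) (τ + (∫ x, R x ∂μ + ∫ y, S y ∂ν))).imp ?_ ?_
  · rintro ⟨π, hπ, hcost⟩
    refine ⟨π, hπ, ?_⟩
    have := hπ.isProbabilityMeasure
    have hdiscrete : Integrable (fun z : E × E => -⟪s z.1, t z.2⟫) π :=
      integrable_comp_of_finite ((hs.comp measurable_fst).prodMk (ht.comp measurable_snd))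
        fun k : s.range × t.range => -⟪(k.1 : E), (k.2 : E)⟫
    refine (hπ.neg_integral_inner_le hμ hν hR hS hdiscrete fun z => ?_).trans ?_
    · have := neg_abs_le (⟪z.1, z.2⟫ - ⟪s z.1, t z.2⟫)
      linarith [hround z.1 z.2]
    · linarith
  · rintro ⟨a, b, hab, hlt⟩
    have ha := integrable_comp_of_finite (μ := μ) hs a
    have hb := integrable_comp_of_finite (μ := ν) ht b
    refine ⟨_, _, ((measurable_of_finite a).comp hs).sub hRm,
      ((measurable_of_finite b).comp ht).sub hSm, fun x y => ?_, ha.sub hR, hb.sub hS, ?_⟩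
    · have := hab ⟨s x, s.mem_range_self x⟩ ⟨t y, t.mem_range_self y⟩
      simp only [Pi.sub_apply, Function.comp_apply]
      linarith [hround x y, le_abs_self (⟪x, y⟫ - ⟪s x, t y⟫)]
    · simp only [Pi.sub_apply, Function.comp_apply]
      rw [integral_sub ha hR, integral_sub hb hS]
      linarith

theorem W2sq_le_of_forall_isPolarPair [IsProbabilityMeasure μ] [IsProbabilityMeasure ν]
    (hμ : Integrable (fun x => ‖x‖ ^ 2) μ) (hν : Integrable (fun y => ‖y‖ ^ 2) ν) {V : ℝ}
    (hV : ∀ f g : E → ℝ, Measurable f → Measurable g → IsPolarPair f g → Integrable f μ →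
      Integrable g ν → ∫ x, f x ∂μ + ∫ y, g y ∂ν ≤ V) :
    W2sq μ ν ≤ ENNReal.ofReal (∫ x, ‖x‖ ^ 2 ∂μ + ∫ y, ‖y‖ ^ 2 ∂ν + 2 * V) := by
  refine ENNReal.le_of_forall_pos_le_add fun ε hε _ => ?_
  rcases exists_isCoupling_or_exists_isPolarPair hμ hν V (half_pos (NNReal.coe_pos.2 hε)) with
    ⟨π, hπ, hcost⟩ | ⟨f, g, hfm, hgm, hfg, hf, hg, hlt⟩
  · refine (iInf₂_le π hπ).trans ?_
    rw [hπ.lintegral_nnnorm_sub_sq hμ hν, ← ENNReal.ofReal_coe_nnreal]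
    refine le_trans (ENNReal.ofReal_le_ofReal ?_) ENNReal.ofReal_add_le
    linarith
  · exact absurd (hV f g hfm hgm hfg hf hg) hlt.not_ge

end StrongDuality

section SuperlinearDecay

/-- The function `f` tends to `-∞` at infinity faster than any linear function of the norm. -/
def HasSuperlinearDecay {E : Type*} [Norm E] (f : E → ℝ) : Prop :=
  ∀ t : ℝ, ∃ C : ℝ, ∀ x, f x ≤ C - t * ‖x‖

theorem hasSuperlinearDecay_neg_sq_norm_div_two {E : Type*} [Norm E] :
    HasSuperlinearDecay fun x : E => -‖x‖ ^ 2 / 2 :=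
  fun t => ⟨t ^ 2 / 2, fun x => by linarith [two_mul_le_add_sq t ‖x‖]⟩

theorem abs_exp_mul_self_le (t : ℝ) :
    |Real.exp t * t| ≤ 2 * Real.exp (1 / 2 * t) + Real.exp (2 * t) := by
  have hhalf : Real.exp (1 / 2 * t) = Real.exp t * Real.exp (-(1 / 2 * t)) := by
    rw [← Real.exp_add]
    ring_nf
  have hdouble : Real.exp (2 * t) = Real.exp t * Real.exp t := by
    rw [← Real.exp_add]
    ring_nf
  have habs : |t| ≤ 2 * Real.exp (-(1 / 2 * t)) + Real.exp t := by
    refine abs_le.2 ⟨?_, ?_⟩ <;>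
      linarith [Real.add_one_le_exp (-(1 / 2 * t)), Real.add_one_le_exp t,
        Real.exp_pos (-(1 / 2 * t)), Real.exp_pos t]
  rw [abs_mul, Real.abs_exp, hhalf, hdouble]
  linarith [mul_le_mul_of_nonneg_left habs (Real.exp_pos t).le]

section NormedSpace

variable {E : Type*} [NormedAddCommGroup E] [NormedSpace ℝ E] [FiniteDimensional ℝ E]
  [MeasurableSpace E] [BorelSpace E] {μ : Measure E} [μ.IsAddHaarMeasure] {f : E → ℝ}

theorem integrable_exp_neg_mul_norm {r : ℝ} (hr : (Module.finrank ℝ E : ℝ) < r) :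
    Integrable (fun x => Real.exp (-(r * ‖x‖))) μ := by
  refine (integrable_one_add_norm hr).mono' (by fun_prop) (.of_forall fun x => ?_)
  have hr0 : 0 ≤ r := (Nat.cast_nonneg _).trans hr.le
  rw [Real.norm_of_nonneg (Real.exp_pos _).le]
  calc Real.exp (-(r * ‖x‖)) = Real.exp ‖x‖ ^ (-r) := by rw [← Real.exp_mul]; ring_nf
    _ ≤ (1 + ‖x‖) ^ (-r) := Real.rpow_le_rpow_of_nonpos (by positivity)
        (by linarith [Real.add_one_le_exp ‖x‖]) (neg_nonpos.2 hr0)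

namespace HasSuperlinearDecay

theorem integrable_of_norm_le_exp {F : Type*} [NormedAddCommGroup F] (hf : HasSuperlinearDecay f)
    {h : E → F} (hh : AEStronglyMeasurable h μ) (s K : ℝ)
    (hle : ∀ x, ‖h x‖ ≤ K * Real.exp (f x + s * ‖x‖)) : Integrable h μ := by
  set r : ℝ := Module.finrank ℝ E + 1
  obtain ⟨C, hC⟩ := hf (r + s)
  refine ((integrable_exp_neg_mul_norm (lt_add_one _)).const_mul (|K| * Real.exp C)).mono' hh
    (.of_forall fun x => ?_)
  calc ‖h x‖ ≤ |K| * Real.exp (f x + s * ‖x‖) := (hle x).trans (by gcongr; exact le_abs_self K)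
    _ ≤ |K| * Real.exp (C + -(r * ‖x‖)) :=
        mul_le_mul_of_nonneg_left (Real.exp_le_exp.2 (by linarith [hC x])) (abs_nonneg K)
    _ = |K| * Real.exp C * Real.exp (-(r * ‖x‖)) := by rw [Real.exp_add, mul_assoc]

theorem integrable_exp (hf : HasSuperlinearDecay f) (hfm : Measurable f) :
    Integrable (fun x => Real.exp (f x)) μ :=
  hf.integrable_of_norm_le_exp (by fun_prop) 0 1 fun x => by simp

theorem integrable_exp_mul_sq_norm (hf : HasSuperlinearDecay f) (hfm : Measurable f) :
    Integrable (fun x => Real.exp (f x) * ‖x‖ ^ 2) μ :=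
  hf.integrable_of_norm_le_exp (by fun_prop) 1 2 fun x => by
    rw [Real.norm_of_nonneg (by positivity), one_mul, Real.exp_add, mul_left_comm]
    gcongr
    linarith [Real.quadratic_le_exp_of_nonneg (norm_nonneg x), norm_nonneg x]

theorem const_mul {E : Type*} [Norm E] {f : E → ℝ} (hf : HasSuperlinearDecay f) {r : ℝ}
    (hr : 0 < r) : HasSuperlinearDecay fun x => r * f x := fun t => by
  obtain ⟨C, hC⟩ := hf (t / r)
  refine ⟨r * C, fun x => (mul_le_mul_of_nonneg_left (hC x) hr.le).trans_eq ?_⟩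
  field_simp

theorem integrable_exp_mul_self (hf : HasSuperlinearDecay f) (hfm : Measurable f) :
    Integrable (fun x => Real.exp (f x) * f x) μ :=
  ((((hf.const_mul (r := 1 / 2) (by norm_num)).integrable_exp (by fun_prop)).const_mul 2).add
    ((hf.const_mul two_pos).integrable_exp (by fun_prop))).mono' (by fun_prop)
    (.of_forall fun x => abs_exp_mul_self_le (f x))

end HasSuperlinearDecay

end NormedSpace

section InnerProductSpace

variable {E : Type*} [NormedAddCommGroup E] [InnerProductSpace ℝ E] {f g : E → ℝ}

theorem HasSuperlinearDecay.add_inner (hf : HasSuperlinearDecay f) (a : E) :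
    HasSuperlinearDecay fun x => f x + ⟪a, x⟫ := fun t => by
  obtain ⟨C, hC⟩ := hf (t + ‖a‖)
  exact ⟨C, fun x => by linarith [hC x, real_inner_le_norm a x]⟩

theorem norm_le_sum_abs_inner {ι : Type*} [Fintype ι] (b : OrthonormalBasis ι ℝ E) (x : E) :
    ‖x‖ ≤ ∑ i, |⟪b i, x⟫| := by
  calc ‖x‖ = ‖∑ i, ⟪b i, x⟫ • b i‖ := by rw [b.sum_repr']
    _ ≤ ∑ i, ‖⟪b i, x⟫ • b i‖ := norm_sum_le _ _
    _ = ∑ i, |⟪b i, x⟫| := by simp [norm_smul]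

-- The finitely many values of `g` at the vertices `y σ` of a cube control `f` everywhere: the
-- vertex whose signs are those of the coordinates of `x` has `⟪x, y σ⟫ ≥ t * ‖x‖`.
theorem IsPolarPair.hasSuperlinearDecay [FiniteDimensional ℝ E] (h : IsPolarPair f g) :
    HasSuperlinearDecay f := fun t => by
  let b := stdOrthonormalBasis ℝ E
  let y : (Fin (Module.finrank ℝ E) → SignType) → E := fun σ => ∑ i, (|t| * (σ i : ℝ)) • b i
  obtain ⟨C, hC⟩ : ∃ C, ∀ σ, -g (y σ) ≤ C := Finite.exists_le _
  refine ⟨C, fun x => ?_⟩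
  let σ : Fin (Module.finrank ℝ E) → SignType := fun i => SignType.sign ⟪b i, x⟫
  have hinner : ⟪x, y σ⟫ = |t| * ∑ i, |⟪b i, x⟫| := by
    simp only [y, σ, inner_sum, real_inner_smul_right, Finset.mul_sum, mul_assoc,
      real_inner_comm x, sign_mul_self]
  have hnorm : t * ‖x‖ ≤ |t| * ∑ i, |⟪b i, x⟫| := by
    gcongr
    exacts [le_abs_self t, norm_le_sum_abs_inner b x]
  linarith [h x (y σ), hC σ]

end InnerProductSpace

end SuperlinearDecay

section Recentering

variable {E : Type*} [NormedAddCommGroup E] [InnerProductSpace ℝ E] [MeasurableSpace E]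
  {ρ : Measure E}

section Convexity

theorem convexOn_integral_exp_inner (hexp : ∀ a : E, Integrable (fun x => Real.exp ⟪a, x⟫) ρ) :
    ConvexOn ℝ Set.univ fun a => ∫ x, Real.exp ⟪a, x⟫ ∂ρ :=
  integral_convexOn_of_integrand_ae convex_univ
    (.of_forall fun x => convexOn_exp.comp_linearMap ((innerₗ E).flip x)) fun a _ => hexp a

theorem convexOn_integral_max_zero_inner
    (hint : ∀ a : E, Integrable (fun x => max 0 ⟪a, x⟫) ρ) :
    ConvexOn ℝ Set.univ fun a => ∫ x, max 0 ⟪a, x⟫ ∂ρ :=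
  integral_convexOn_of_integrand_ae convex_univ
    (.of_forall fun x => (convexOn_const 0 convex_univ).sup
      (((innerₗ E).flip x).convexOn convex_univ)) fun a _ => hint a

end Convexity

section Tilt

theorem integrableExpSet_inner_tilted_inner
    (hexp : ∀ a : E, Integrable (fun x => Real.exp ⟪a, x⟫) ρ) (a v : E) :
    ProbabilityTheory.integrableExpSet (fun x => ⟪v, x⟫) (ρ.tilted fun x => ⟪a, x⟫) =
      Set.univ := by
  refine Set.eq_univ_of_forall fun t =>
    (integrable_tilted_iff (hexp a) _).2 ((hexp (a + t • v)).congr (.of_forall fun x => ?_))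
  simp only [smul_eq_mul, ← Real.exp_add, inner_add_left, real_inner_smul_left]

theorem integral_inner_tilted_eq_zero_of_forall_le
    (hexp : ∀ a : E, Integrable (fun x => Real.exp ⟪a, x⟫) ρ) {a : E}
    (hmin : ∀ b : E, ∫ x, Real.exp ⟪a, x⟫ ∂ρ ≤ ∫ x, Real.exp ⟪b, x⟫ ∂ρ) (v : E) :
    ∫ x, ⟪v, x⟫ ∂(ρ.tilted fun x => ⟪a, x⟫) = 0 := by
  have hmgf (t : ℝ) : ProbabilityTheory.mgf (fun x => ⟪v, x⟫) (ρ.tilted fun x => ⟪a, x⟫) t =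
      (∫ x, Real.exp ⟪a + t • v, x⟫ ∂ρ) / ∫ x, Real.exp ⟪a, x⟫ ∂ρ := by
    rw [ProbabilityTheory.mgf, integral_exp_tilted]
    simp only [Pi.add_apply, inner_add_left, real_inner_smul_left]
  have hlocal : IsLocalMin
      (ProbabilityTheory.mgf (fun x => ⟪v, x⟫) (ρ.tilted fun x => ⟪a, x⟫)) 0 :=
    .of_forall fun t => by
      rw [hmgf, hmgf, zero_smul, add_zero]
      exact div_le_div_of_nonneg_right (hmin _) (integral_nonneg fun x => (Real.exp_pos _).le)
  rw [← ProbabilityTheory.deriv_mgf_zero (by simp [integrableExpSet_inner_tilted_inner hexp])]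
  exact hlocal.deriv_eq_zero

theorem integrable_id_tilted_inner [FiniteDimensional ℝ E] [BorelSpace E]
    (hexp : ∀ a : E, Integrable (fun x => Real.exp ⟪a, x⟫) ρ) (a : E) :
    Integrable (fun x => x) (ρ.tilted fun x => ⟪a, x⟫) :=
  (integrable_finsetSum _ fun i _ =>
    (ProbabilityTheory.integrable_of_mem_interior_integrableExpSet
      (by simp [integrableExpSet_inner_tilted_inner hexp])).abs).mono' (by fun_prop)
    (.of_forall (norm_le_sum_abs_inner (stdOrthonormalBasis ℝ E)))

end Tilt

section Minimizer

variable [OpensMeasurableSpace E]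

theorem integrable_max_zero_inner {a : E} (hexp : Integrable (fun x => Real.exp ⟪a, x⟫) ρ) :
    Integrable (fun x => max 0 ⟪a, x⟫) ρ := by
  refine hexp.mono' (by fun_prop) (.of_forall fun x => ?_)
  rw [Real.norm_of_nonneg (le_max_left _ _)]
  exact max_le (Real.exp_pos _).le (by linarith [Real.add_one_le_exp ⟪a, x⟫])

theorem integral_max_zero_inner_pos {a : E} (hexp : Integrable (fun x => Real.exp ⟪a, x⟫) ρ)
    (hpos : 0 < ρ {x | 0 < ⟪a, x⟫}) : 0 < ∫ x, max 0 ⟪a, x⟫ ∂ρ := by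
  rw [integral_pos_iff_support_of_nonneg (fun x => le_max_left 0 ⟪a, x⟫)
    (integrable_max_zero_inner hexp)]
  refine hpos.trans_le (measure_mono fun x hx => ?_)
  simpa only [Function.mem_support, ne_eq, max_eq_left_iff, not_le,
    Set.mem_ofPred_eq] using hx

theorem exists_pos_mul_norm_le_integral_max_zero_inner [FiniteDimensional ℝ E]
    (hexp : ∀ a : E, Integrable (fun x => Real.exp ⟪a, x⟫) ρ)
    (hpos : ∀ a : E, a ≠ 0 → 0 < ρ {x | 0 < ⟪a, x⟫}) :
    ∃ c > 0, ∀ a : E, c * ‖a‖ ≤ ∫ x, max 0 ⟪a, x⟫ ∂ρ := by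
  have hcont : Continuous fun a : E => ∫ x, max 0 ⟪a, x⟫ ∂ρ :=
    continuousOn_univ.1 ((convexOn_integral_max_zero_inner
      fun a => integrable_max_zero_inner (hexp a)).continuousOn isOpen_univ)
  obtain ⟨c, hc, hle⟩ := (isCompact_sphere (0 : E) 1).exists_forall_le' hcont.continuousOn
    fun a ha => integral_max_zero_inner_pos (hexp a) (hpos a (ne_zero_of_mem_unit_sphere ⟨a, ha⟩))
  refine ⟨c, hc, fun a => ?_⟩
  rcases eq_or_ne a 0 with rfl | ha
  · simp
  · have hunit : c ≤ ∫ x, max 0 ⟪‖a‖⁻¹ • a, x⟫ ∂ρ :=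
      hle _ (by simp [norm_smul, ha])
    calc c * ‖a‖ ≤ (∫ x, max 0 ⟪‖a‖⁻¹ • a, x⟫ ∂ρ) * ‖a‖ := by gcongr
      _ = ∫ x, max 0 ⟪a, x⟫ ∂ρ := by
        rw [← integral_mul_const]
        refine integral_congr_ae (.of_forall fun x => ?_)
        simp only
        rw [max_mul_of_nonneg _ _ (norm_nonneg a), zero_mul, real_inner_smul_left, mul_comm,
          mul_inv_cancel_left₀ (norm_ne_zero_iff.2 ha)]

theorem exists_forall_integral_exp_inner_le [FiniteDimensional ℝ E]
    (hexp : ∀ a : E, Integrable (fun x => Real.exp ⟪a, x⟫) ρ)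
    (hpos : ∀ a : E, a ≠ 0 → 0 < ρ {x | 0 < ⟪a, x⟫}) :
    ∃ a : E, ∀ b : E, ∫ x, Real.exp ⟪a, x⟫ ∂ρ ≤ ∫ x, Real.exp ⟪b, x⟫ ∂ρ := by
  obtain ⟨c, hc, hle⟩ := exists_pos_mul_norm_le_integral_max_zero_inner hexp hpos
  have hcont : Continuous fun a : E => ∫ x, Real.exp ⟪a, x⟫ ∂ρ :=
    continuousOn_univ.1 ((convexOn_integral_exp_inner hexp).continuousOn isOpen_univ)
  refine hcont.exists_forall_le (Filter.tendsto_atTop_mono (fun a => (hle a).trans ?_)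
    ((tendsto_norm_cocompact_atTop (E := E)).const_mul_atTop hc))
  exact integral_mono (integrable_max_zero_inner (hexp a)) (hexp a) fun x =>
    max_le (Real.exp_pos _).le (by linarith [Real.add_one_le_exp ⟪a, x⟫])

end Minimizer

-- The tilt is found by minimising the convex function `a ↦ ∫ x, exp ⟪a, x⟫ ∂ρ`, whose
-- logarithmic gradient at `a` is the barycentre of the tilted measure.
theorem exists_integral_tilted_inner_eq_zero [FiniteDimensional ℝ E] [BorelSpace E]
    (hexp : ∀ a : E, Integrable (fun x => Real.exp ⟪a, x⟫) ρ)
    (hpos : ∀ a : E, a ≠ 0 → 0 < ρ {x | 0 < ⟪a, x⟫}) :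
    ∃ a : E, ∫ x, x ∂(ρ.tilted fun x => ⟪a, x⟫) = 0 := by
  obtain ⟨a, hmin⟩ := exists_forall_integral_exp_inner_le hexp hpos
  refine ⟨a, ?_⟩
  rw [← inner_self_eq_zero (𝕜 := ℝ), ← integral_inner (integrable_id_tilted_inner hexp a)]
  exact integral_inner_tilted_eq_zero_of_forall_le hexp hmin _

theorem integral_tilted_eq_zero_iff {α F : Type*} [MeasurableSpace α] [NormedAddCommGroup F]
    [NormedSpace ℝ F] {μ : Measure α} [NeZero μ] {f : α → ℝ}
    (hf : Integrable (fun x => Real.exp (f x)) μ) {g : α → F} :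
    ∫ x, g x ∂(μ.tilted f) = 0 ↔ ∫ x, Real.exp (f x) • g x ∂μ = 0 := by
  simp only [integral_tilted, div_eq_inv_mul, mul_smul, integral_smul, smul_eq_zero, inv_eq_zero,
    (integral_exp_pos hf).ne', false_or]

theorem HasSuperlinearDecay.exists_integral_exp_add_inner_smul_eq_zero [FiniteDimensional ℝ E]
    [BorelSpace E] {f : E → ℝ} {μ : Measure E} [μ.IsAddHaarMeasure] (hf : HasSuperlinearDecay f)
    (hfm : Measurable f) : ∃ a : E, ∫ x, Real.exp (f x + ⟪a, x⟫) • x ∂μ = 0 := by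
  have hint := hf.integrable_exp hfm (μ := μ)
  have hint_add (a : E) : Integrable (fun x => Real.exp (f x + ⟪a, x⟫)) μ :=
    (hf.add_inner a).integrable_exp (by fun_prop)
  have hexp (a : E) : Integrable (fun x => Real.exp ⟪a, x⟫) (μ.tilted f) :=
    (integrable_tilted_iff hint _).2 <| by simpa only [smul_eq_mul, ← Real.exp_add] using hint_add a
  have hpos (a : E) (ha : a ≠ 0) : 0 < μ.tilted f {x | 0 < ⟪a, x⟫} := by
    have hopen : IsOpen {x : E | 0 < ⟪a, x⟫} := isOpen_lt (by fun_prop) (by fun_prop)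
    rw [pos_iff_ne_zero]
    exact mt (absolutelyContinuous_tilted hint ·)
      (hopen.measure_ne_zero μ ⟨a, real_inner_self_pos.2 ha⟩)
  obtain ⟨a, ha⟩ := exists_integral_tilted_inner_eq_zero hexp hpos
  rw [tilted_tilted hint] at ha
  exact ⟨a, (integral_tilted_eq_zero_iff (hint_add a)).1 ha⟩

end Recentering

section Gaussian

variable {E : Type*} [NormedAddCommGroup E] [InnerProductSpace ℝ E] [FiniteDimensional ℝ E]
  [MeasurableSpace E] [BorelSpace E]

theorem integrable_exp_neg_sq_norm_div_two :
    Integrable fun x : E => Real.exp (-‖x‖ ^ 2 / 2) :=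
  hasSuperlinearDecay_neg_sq_norm_div_two.integrable_exp (by fun_prop)

theorem integral_exp_neg_sq_norm_div_two :
    ∫ x : E, Real.exp (-‖x‖ ^ 2 / 2) = (2 * Real.pi) ^ ((Module.finrank ℝ E : ℝ) / 2) := by
  have h := GaussianFourier.integral_rexp_neg_mul_sq_norm (V := E) (b := 1 / 2) (by norm_num)
  rw [div_div_eq_mul_div, div_one, mul_comm Real.pi] at h
  rw [← h]
  congr 1 with x
  ring_nf

theorem stdGaussian_eq_tilted :
    ProbabilityTheory.stdGaussian E = volume.tilted fun x => -‖x‖ ^ 2 / 2 := by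
  have := isProbabilityMeasure_tilted (integrable_exp_neg_sq_norm_div_two (E := E))
  refine Measure.ext_of_charFun (funext fun t => ?_)
  set Z : ℝ := (2 * Real.pi) ^ ((Module.finrank ℝ E : ℝ) / 2) with hZ
  have hZ_cast : (Real.pi / (1 / 2) : ℂ) ^ (Module.finrank ℝ E / 2 : ℂ) = Z := by
    rw [hZ, Complex.ofReal_cpow (by positivity)]
    push_cast
    ring_nf
  have hZ_ne : (Z : ℂ) ≠ 0 := by exact_mod_cast (by positivity : Z ≠ 0)
  have hfourier := GaussianFourier.integral_cexp_neg_mul_sq_norm_add (V := E) (b := 1 / 2)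
    (by norm_num) Complex.I t
  rw [hZ_cast] at hfourier
  calc charFun (ProbabilityTheory.stdGaussian E) t
      = (Z : ℂ)⁻¹ * (Z * Complex.exp (Complex.I ^ 2 * ‖t‖ ^ 2 / (4 * (1 / 2)))) := by
        rw [ProbabilityTheory.charFun_stdGaussian, inv_mul_cancel_left₀ hZ_ne, Complex.I_sq]
        ring_nf
    _ = charFun (volume.tilted fun x : E => -‖x‖ ^ 2 / 2) t := by
        rw [← hfourier, charFun_apply, integral_tilted, integral_exp_neg_sq_norm_div_two,
          ← integral_const_mul]
        congr 1 with x
        rw [Complex.exp_add, Complex.real_smul, real_inner_comm, ← hZ]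
        push_cast
        ring_nf

theorem stdGaussian_eq (d : ℕ) :
    stdGaussian d = ProbabilityTheory.stdGaussian (EuclideanSpace ℝ (Fin d)) := by
  rw [stdGaussian_eq_tilted, stdGaussian, Measure.tilted, integral_exp_neg_sq_norm_div_two,
    finrank_euclideanSpace_fin]
  congr 1 with x
  rw [neg_div, Real.rpow_neg (by positivity), inv_mul_eq_div]

theorem stdGaussian_tilted_add_sq_norm_div_two (f : E → ℝ) :
    (ProbabilityTheory.stdGaussian E).tilted (fun x => f x + ‖x‖ ^ 2 / 2) = volume.tilted f := by
  rw [stdGaussian_eq_tilted, tilted_tilted integrable_exp_neg_sq_norm_div_two]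
  congr 1 with x
  simp only [Pi.add_apply]
  ring

theorem integrable_exp_add_sq_norm_div_two_stdGaussian_iff {f : E → ℝ} :
    Integrable (fun x => Real.exp (f x + ‖x‖ ^ 2 / 2)) (ProbabilityTheory.stdGaussian E) ↔
      Integrable fun x => Real.exp (f x) := by
  rw [stdGaussian_eq_tilted, integrable_tilted_iff integrable_exp_neg_sq_norm_div_two]
  refine integrable_congr (.of_forall fun x => ?_)
  simp only [smul_eq_mul, ← Real.exp_add]
  ring_nf

theorem log_integral_exp_add_sq_norm_div_two_stdGaussian {f : E → ℝ}
    (hf : Integrable fun x => Real.exp (f x)) :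
    Real.log (∫ x, Real.exp (f x + ‖x‖ ^ 2 / 2) ∂(ProbabilityTheory.stdGaussian E)) =
      Real.log (∫ x, Real.exp (f x)) - Module.finrank ℝ E / 2 * Real.log (2 * Real.pi) := by
  have hsum : ((fun x : E => -‖x‖ ^ 2 / 2) + fun x => f x + ‖x‖ ^ 2 / 2) = f := by
    ext x
    simp only [Pi.add_apply]
    ring
  rw [stdGaussian_eq_tilted, integral_exp_tilted, hsum, integral_exp_neg_sq_norm_div_two,
    Real.log_div (integral_exp_pos hf).ne' (by positivity), Real.log_rpow (by positivity)]

end Gaussian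

section Entropy

section GibbsVariationalPrinciple

variable {α : Type*} [MeasurableSpace α] {μ ν : Measure α} [IsProbabilityMeasure ν] {F : α → ℝ}

theorem relEnt_eq_klDiv (μ ν : Measure α) [IsProbabilityMeasure μ] [IsProbabilityMeasure ν] :
    relEnt μ ν = InformationTheory.klDiv μ ν := by
  rw [relEnt, InformationTheory.klDiv_def]
  simp only [probReal_univ, add_sub_cancel_right, llr_def]
  congr

theorem integral_le_toReal_relEnt_add_log [IsProbabilityMeasure μ] (h : relEnt μ ν ≠ ∞)
    (hF : Integrable F μ) (hexp : Integrable (fun x => Real.exp (F x)) ν) :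
    ∫ x, F x ∂μ ≤ (relEnt μ ν).toReal + Real.log (∫ x, Real.exp (F x) ∂ν) := by
  rw [relEnt_eq_klDiv] at h ⊢
  obtain ⟨hac, hllr⟩ := InformationTheory.klDiv_ne_top_iff.1 h
  have := isProbabilityMeasure_tilted hexp
  have hgibbs := InformationTheory.integral_llr_add_sub_measure_univ_nonneg
    (hac.trans (absolutelyContinuous_tilted hexp))
    (integrable_llr_tilted_right hac hF hllr hexp)
  rw [integral_llr_tilted_right hac hF hexp hllr, probReal_univ, probReal_univ] at hgibbs
  rw [InformationTheory.toReal_klDiv_of_measure_eq hac (by simp only [measure_univ])]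
  linarith

theorem llr_tilted_self_ae_eq (hexp : Integrable (fun x => Real.exp (F x)) ν) :
    llr (ν.tilted F) ν =ᵐ[ν.tilted F] fun x => F x - Real.log (∫ x, Real.exp (F x) ∂ν) :=
  (tilted_absolutelyContinuous ν F).ae_eq (log_rnDeriv_tilted_left_self hexp)

theorem relEnt_tilted_self_ne_top (hexp : Integrable (fun x => Real.exp (F x)) ν)
    (hF : Integrable F (ν.tilted F)) : relEnt (ν.tilted F) ν ≠ ∞ := by
  have := isProbabilityMeasure_tilted hexp
  rw [relEnt_eq_klDiv]
  exact InformationTheory.klDiv_ne_top (tilted_absolutelyContinuous ν F)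
    ((hF.sub (integrable_const _)).congr (llr_tilted_self_ae_eq hexp).symm)

theorem toReal_relEnt_tilted_self (hexp : Integrable (fun x => Real.exp (F x)) ν)
    (hF : Integrable F (ν.tilted F)) :
    (relEnt (ν.tilted F) ν).toReal =
      ∫ x, F x ∂(ν.tilted F) - Real.log (∫ x, Real.exp (F x) ∂ν) := by
  have := isProbabilityMeasure_tilted hexp
  rw [relEnt_eq_klDiv, InformationTheory.toReal_klDiv_of_measure_eq
    (tilted_absolutelyContinuous ν F) (by simp only [measure_univ]),
    integral_congr_ae (llr_tilted_self_ae_eq hexp), integral_sub hF (integrable_const _),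
    integral_const, probReal_univ, one_smul]

end GibbsVariationalPrinciple

section Gaussian

variable {E : Type*} [NormedAddCommGroup E] [InnerProductSpace ℝ E] [FiniteDimensional ℝ E]
  [MeasurableSpace E] [BorelSpace E] {f : E → ℝ}

theorem integral_add_half_integral_sq_norm_le {μ : Measure E} [IsProbabilityMeasure μ]
    (hμ : Integrable (fun x => ‖x‖ ^ 2) μ)
    (h : relEnt μ (ProbabilityTheory.stdGaussian E) ≠ ∞) (hfμ : Integrable f μ)
    (hf : Integrable fun x => Real.exp (f x)) :
    ∫ x, f x ∂μ + (∫ x, ‖x‖ ^ 2 ∂μ) / 2 ≤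
      (relEnt μ (ProbabilityTheory.stdGaussian E)).toReal +
        (Real.log (∫ x, Real.exp (f x)) - Module.finrank ℝ E / 2 * Real.log (2 * Real.pi)) := by
  rw [← log_integral_exp_add_sq_norm_div_two_stdGaussian hf, ← integral_div,
    ← integral_add hfμ (hμ.div_const 2)]
  exact integral_le_toReal_relEnt_add_log h (hfμ.add (hμ.div_const 2))
    (integrable_exp_add_sq_norm_div_two_stdGaussian_iff.2 hf)

theorem relEnt_tilted_stdGaussian_ne_top (hf : Integrable fun x => Real.exp (f x))
    (hff : Integrable f (volume.tilted f))
    (hsq : Integrable (fun x => ‖x‖ ^ 2) (volume.tilted f)) :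
    relEnt (volume.tilted f) (ProbabilityTheory.stdGaussian E) ≠ ∞ := by
  rw [← stdGaussian_tilted_add_sq_norm_div_two f] at hff hsq ⊢
  exact relEnt_tilted_self_ne_top (integrable_exp_add_sq_norm_div_two_stdGaussian_iff.2 hf)
    (hff.add (hsq.div_const 2))

theorem toReal_relEnt_tilted_stdGaussian (hf : Integrable fun x => Real.exp (f x))
    (hff : Integrable f (volume.tilted f))
    (hsq : Integrable (fun x => ‖x‖ ^ 2) (volume.tilted f)) :
    (relEnt (volume.tilted f) (ProbabilityTheory.stdGaussian E)).toReal =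
      ∫ x, f x ∂(volume.tilted f) + (∫ x, ‖x‖ ^ 2 ∂(volume.tilted f)) / 2 -
        (Real.log (∫ x, Real.exp (f x)) - Module.finrank ℝ E / 2 * Real.log (2 * Real.pi)) := by
  rw [← log_integral_exp_add_sq_norm_div_two_stdGaussian hf, ← integral_div,
    ← integral_add hff (hsq.div_const 2)]
  rw [← stdGaussian_tilted_add_sq_norm_div_two f] at hff hsq ⊢
  exact toReal_relEnt_tilted_self (integrable_exp_add_sq_norm_div_two_stdGaussian_iff.2 hf)
    (hff.add (hsq.div_const 2))

end Gaussian

end Entropy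

section Equivalence

theorem two_mul_add_two_mul_eq_ofReal {a b : ℝ≥0∞} (ha : a ≠ ∞) (hb : b ≠ ∞) :
    2 * a + 2 * b = ENNReal.ofReal (2 * (a.toReal + b.toReal)) := by
  rw [← mul_add, ← ENNReal.toReal_add ha hb, ENNReal.ofReal_mul zero_le_two,
    ENNReal.ofReal_toReal (ENNReal.add_ne_top.2 ⟨ha, hb⟩), ENNReal.ofReal_ofNat]

variable (E : Type*) [NormedAddCommGroup E] [InnerProductSpace ℝ E] [FiniteDimensional ℝ E]
  [MeasurableSpace E] [BorelSpace E]

/-- The symmetrized Talagrand inequality on a Euclidean space `E`: the squared Wasserstein distance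
of two probability measures, the first of which is centered, is at most twice the sum of their
entropies relative to the standard Gaussian measure. -/
def SymmetrizedTalagrand : Prop :=
  ∀ μ ν : Measure E, IsProbabilityMeasure μ → IsProbabilityMeasure ν →
    Integrable (fun x => ‖x‖ ^ 2) μ → Integrable (fun x => ‖x‖ ^ 2) ν → ∫ x, x ∂μ = 0 →
    W2sq μ ν ≤ 2 * relEnt μ (ProbabilityTheory.stdGaussian E) +
      2 * relEnt ν (ProbabilityTheory.stdGaussian E)

/-- The functional Santaló inequality on a Euclidean space `E`, for polar pairs of log-densities
the first of which has its barycentre at the origin. -/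
def FunctionalSantalo : Prop :=
  ∀ f g : E → ℝ, Measurable f → Measurable g → IsPolarPair f g →
    Integrable (fun x => Real.exp (f x)) → ∫ x, Real.exp (f x) • x = 0 →
    (∫ x, Real.exp (f x)) * (∫ y, Real.exp (g y)) ≤ (2 * Real.pi) ^ Module.finrank ℝ E

variable {E} {f g : E → ℝ} {μ ν : Measure E}

theorem integral_exp_mul_integral_exp_le_iff (hf : Integrable fun x => Real.exp (f x))
    (hg : Integrable fun x => Real.exp (g x)) :
    (∫ x, Real.exp (f x)) * (∫ y, Real.exp (g y)) ≤ (2 * Real.pi) ^ Module.finrank ℝ E ↔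
      Real.log (∫ x, Real.exp (f x)) + Real.log (∫ y, Real.exp (g y)) ≤
        Module.finrank ℝ E * Real.log (2 * Real.pi) := by
  have hZf := integral_exp_pos hf
  have hZg := integral_exp_pos hg
  rw [← Real.log_le_log_iff (by positivity) (by positivity), Real.log_mul hZf.ne' hZg.ne',
    Real.log_pow]

theorem SymmetrizedTalagrand.functionalSantalo (hT : SymmetrizedTalagrand E) :
    FunctionalSantalo E := by
  intro f g hfm hgm hfg hf hcent
  have hdf := hfg.hasSuperlinearDecay
  have hdg := hfg.symm.hasSuperlinearDecay
  have hg : Integrable fun x => Real.exp (g x) := hdg.integrable_exp hgm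
  have hfi : Integrable f (volume.tilted f) :=
    (integrable_tilted_iff hf _).2 (hdf.integrable_exp_mul_self hfm)
  have hgi : Integrable g (volume.tilted g) :=
    (integrable_tilted_iff hg _).2 (hdg.integrable_exp_mul_self hgm)
  have hfs : Integrable (fun x => ‖x‖ ^ 2) (volume.tilted f) :=
    (integrable_tilted_iff hf _).2 (hdf.integrable_exp_mul_sq_norm hfm)
  have hgs : Integrable (fun x => ‖x‖ ^ 2) (volume.tilted g) :=
    (integrable_tilted_iff hg _).2 (hdg.integrable_exp_mul_sq_norm hgm)
  have hW := (hfg.ofReal_le_W2sq hfs hgs hfi hgi).trans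
    (hT _ _ (isProbabilityMeasure_tilted hf) (isProbabilityMeasure_tilted hg) hfs hgs
      ((integral_tilted_eq_zero_iff hf).2 hcent))
  rw [two_mul_add_two_mul_eq_ofReal (relEnt_tilted_stdGaussian_ne_top hf hfi hfs)
    (relEnt_tilted_stdGaussian_ne_top hg hgi hgs), ENNReal.ofReal_le_ofReal_iff (by positivity),
    toReal_relEnt_tilted_stdGaussian hf hfi hfs, toReal_relEnt_tilted_stdGaussian hg hgi hgs] at hW
  rw [integral_exp_mul_integral_exp_le_iff hf hg]
  linarith

theorem FunctionalSantalo.log_integral_exp_add_log_integral_exp_le (hS : FunctionalSantalo E)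
    (hfm : Measurable f) (hgm : Measurable g) (hfg : IsPolarPair f g) :
    ∃ a : E, Real.log (∫ x, Real.exp (f x + ⟪a, x⟫)) + Real.log (∫ y, Real.exp (g y)) ≤
      Module.finrank ℝ E * Real.log (2 * Real.pi) := by
  obtain ⟨a, ha⟩ :=
    hfg.hasSuperlinearDecay.exists_integral_exp_add_inner_smul_eq_zero hfm (μ := volume)
  have hfa : Integrable fun x => Real.exp (f x + ⟪a, x⟫) :=
    (hfg.hasSuperlinearDecay.add_inner a).integrable_exp (by fun_prop)
  refine ⟨a, (integral_exp_mul_integral_exp_le_iff hfa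
    (hfg.symm.hasSuperlinearDecay.integrable_exp hgm)).1 ?_⟩
  rw [← integral_add_right_eq_self (fun y => Real.exp (g y)) a]
  exact hS _ _ (by fun_prop) (by fun_prop) (hfg.add_inner_comp_add a) hfa ha

theorem FunctionalSantalo.integral_add_integral_le (hS : FunctionalSantalo E)
    [IsProbabilityMeasure μ] [IsProbabilityMeasure ν]
    (hμ : Integrable (fun x => ‖x‖ ^ 2) μ) (hν : Integrable (fun x => ‖x‖ ^ 2) ν)
    (hcent : ∫ x, x ∂μ = 0) (hentμ : relEnt μ (ProbabilityTheory.stdGaussian E) ≠ ∞)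
    (hentν : relEnt ν (ProbabilityTheory.stdGaussian E) ≠ ∞)
    (hfm : Measurable f) (hgm : Measurable g) (hfg : IsPolarPair f g)
    (hfμ : Integrable f μ) (hgν : Integrable g ν) :
    ∫ x, f x ∂μ + ∫ y, g y ∂ν ≤ (relEnt μ (ProbabilityTheory.stdGaussian E)).toReal +
      (relEnt ν (ProbabilityTheory.stdGaussian E)).toReal -
        (∫ x, ‖x‖ ^ 2 ∂μ + ∫ y, ‖y‖ ^ 2 ∂ν) / 2 := by
  obtain ⟨a, ha⟩ := hS.log_integral_exp_add_log_integral_exp_le hfm hgm hfg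
  have hid : Integrable (fun x => x) μ :=
    ((memLp_two_iff_integrable_sq_norm (by fun_prop)).2 hμ).integrable one_le_two
  have htilt : ∫ x, f x + ⟪a, x⟫ ∂μ = ∫ x, f x ∂μ := by
    rw [integral_add hfμ (hid.const_inner a), integral_inner hid, hcent, inner_zero_right, add_zero]
  have hgibbs_f := integral_add_half_integral_sq_norm_le hμ hentμ (hfμ.add (hid.const_inner a))
    ((hfg.hasSuperlinearDecay.add_inner a).integrable_exp (by fun_prop))
  have hgibbs_g := integral_add_half_integral_sq_norm_le hν hentν hgν
    (hfg.symm.hasSuperlinearDecay.integrable_exp hgm)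
  simp only [Pi.add_apply, htilt] at hgibbs_f
  linarith

theorem FunctionalSantalo.symmetrizedTalagrand (hS : FunctionalSantalo E) :
    SymmetrizedTalagrand E := by
  intro μ ν _ _ hμ hν hcent
  by_cases hentμ : relEnt μ (ProbabilityTheory.stdGaussian E) = ∞
  · simp [hentμ]
  by_cases hentν : relEnt ν (ProbabilityTheory.stdGaussian E) = ∞
  · simp [hentν]
  refine (W2sq_le_of_forall_isPolarPair hμ hν fun f g hfm hgm hfg hfμ hgν =>
    hS.integral_add_integral_le hμ hν hcent hentμ hentν hfm hgm hfg hfμ hgν).trans_eq ?_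
  rw [two_mul_add_two_mul_eq_ofReal hentμ hentν]
  ring_nf

theorem symmetrized_talagrand_iff_functional_santalo_general :
    SymmetrizedTalagrand E ↔ FunctionalSantalo E :=
  ⟨SymmetrizedTalagrand.functionalSantalo, FunctionalSantalo.symmetrizedTalagrand⟩

end Equivalence

/-- **Equivalence of the symmetrized Talagrand inequality and the functional Santaló
inequality** (in dimension `d`). -/
theorem symmetrized_talagrand_iff_functional_santalo (d : ℕ) (hd : 1 ≤ d) :
    (∀ μ ν : Measure (EuclideanSpace ℝ (Fin d)),
        IsProbabilityMeasure μ → IsProbabilityMeasure ν →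
        Integrable (fun x => ‖x‖ ^ 2) μ → Integrable (fun x => ‖x‖ ^ 2) ν →
        (∫ x, x ∂μ) = 0 →
        W2sq μ ν ≤ 2 * relEnt μ (stdGaussian d) + 2 * relEnt ν (stdGaussian d)) ↔
    (∀ f g : EuclideanSpace ℝ (Fin d) → ℝ, Measurable f → Measurable g →
        (∀ x y, f x + g y ≤ -⟪x, y⟫) →
        Integrable (fun x => Real.exp (f x)) →
        (∫ x, Real.exp (f x) • x) = 0 →
        (∫ x, Real.exp (f x)) * (∫ y, Real.exp (g y)) ≤ (2 * Real.pi) ^ d) := by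
  simpa only [SymmetrizedTalagrand, FunctionalSantalo, IsPolarPair, ← stdGaussian_eq,
    finrank_euclideanSpace_fin] using
    symmetrized_talagrand_iff_functional_santalo_general (E := EuclideanSpace ℝ (Fin d))
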